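/- arXiv:1602.02203 — 2 statements merged into one kernel-verified Lean document; each statement's English description precedes it below -/
import Mathlib

section
/- If min(α11, α22) ≥ max(α12, α21), β1 ≥ 0 and β2 ≥ 0, then min(D1, D2) = α11 + α22 − max(α12 − β1, α21 − β2). -/
/-- The first sum GDoF bound of Theorem 1 of the paper:
    D1 = max(α11, α12) + max(α21 − α11 + β1, α22 − α12 + β1, 0). -/
def D1 (α11 α12 α21 α22 β1 : ℝ) : ℝ :=
  max α11 α12 + max (α21 - α11 + β1) (max (α22 - α12 + β1) 0)

/-- The second sum GDoF bound of Theorem 1 of the paper: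
    D2 = max(α21, α22) + max(α11 − α21 + β2, α12 − α22 + β2, 0). -/
def D2 (α11 α12 α21 α22 β2 : ℝ) : ℝ :=
  max α21 α22 + max (α11 - α21 + β2) (max (α12 - α22 + β2) 0)

/-- If min(α11, α22) ≥ max(α12, α21), β1 ≥ 0 and β2 ≥ 0, then
    min(D1, D2) = α11 + α22 − max(α12 − β1, α21 − β2). -/
theorem stmt_7 (α11 α12 α21 α22 β1 β2 : ℝ)
    (h : min α11 α22 ≥ max α12 α21) (hβ1 : β1 ≥ 0) (hβ2 : β2 ≥ 0) :
    min (D1 α11 α12 α21 α22 β1) (D2 α11 α12 α21 α22 β2) =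
      α11 + α22 - max (α12 - β1) (α21 - β2) := by
  simp only [ge_iff_le, le_min_iff, max_le_iff] at h
  obtain ⟨⟨h1, h2⟩, h3, h4⟩ := h
  have e1 : D1 α11 α12 α21 α22 β1 = α11 + α22 - (α12 - β1) := by
    unfold D1
    rw [max_eq_left h1, max_eq_left (a := α22 - α12 + β1) (by linarith),
      max_eq_right (by linarith)]
    ring
  have e2 : D2 α11 α12 α21 α22 β2 = α11 + α22 - (α21 - β2) := by
    unfold D2
    rw [max_eq_right h4, max_eq_left (by
      apply max_le <;> linarith)]
    ring
  rw [e1, e2]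
  rcases le_total (α12 - β1) (α21 - β2) with h | h
  · rw [max_eq_right h, min_eq_right (by linarith)]
  · rw [max_eq_left h, min_eq_left (by linarith)]
end

section
/- Let A and B be real numbers with A ≠ B, and let n be an integer. For any real numbers g and g' satisfying ⌊A·g⌋ − ⌊B·g⌋ = n and ⌊A·g'⌋ − ⌊B·g'⌋ = n, it holds that |g − g'| < 2 / |A − B|. In particular, the set {g ∈ ℝ : ⌊A·g⌋ − ⌊B·g⌋ = n} is contained in an interval of length at most 2 / |A − B|. -/
/-- If A ≠ B and ⌊A·g⌋ − ⌊B·g⌋ = n = ⌊A·g'⌋ − ⌊B·g'⌋, then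
    |g − g'| < 2 / |A − B|; in particular the set of such g is contained
    in an interval of length at most 2 / |A − B|. -/
theorem stmt_14 (A B : ℝ) (hAB : A ≠ B) (n : ℤ) :
    (∀ g g' : ℝ, ⌊A * g⌋ - ⌊B * g⌋ = n → ⌊A * g'⌋ - ⌊B * g'⌋ = n →
      |g - g'| < 2 / |A - B|) ∧
    ∃ a b : ℝ, b - a ≤ 2 / |A - B| ∧
      {g : ℝ | ⌊A * g⌋ - ⌊B * g⌋ = n} ⊆ Set.Icc a b := by
  have hne : A - B ≠ 0 := sub_ne_zero.mpr hAB
  have hpos : 0 < |A - B| := abs_pos.mpr hne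
  have two : 2 / |A - B| = 1 / |A - B| + 1 / |A - B| := by ring
  have key : ∀ g : ℝ, ⌊A * g⌋ - ⌊B * g⌋ = n →
      |g - n / (A - B)| < 1 / |A - B| := by
    intro g h
    have hn : (⌊A * g⌋ : ℝ) - ⌊B * g⌋ = n := by exact_mod_cast h
    have e : g - n / (A - B) = ((A - B) * g - n) / (A - B) := by
      field_simp
    rw [e, abs_div]
    apply div_lt_div_of_pos_right _ hpos
    have h1 := Int.floor_le (A * g)
    have h2 := Int.lt_floor_add_one (A * g)
    have h3 := Int.floor_le (B * g)
    have h4 := Int.lt_floor_add_one (B * g)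
    rw [abs_lt]
    constructor <;> linarith
  refine ⟨?_, n / (A - B) - 1 / |A - B|, n / (A - B) + 1 / |A - B|, ?_, ?_⟩
  · intro g g' h h'
    have k := abs_lt.mp (key g h)
    have k' := abs_lt.mp (key g' h')
    rw [two, abs_lt]
    constructor <;> linarith [k.1, k.2, k'.1, k'.2]
  · rw [two]
    linarith
  · intro g h
    have k := abs_lt.mp (key g h)
    constructor <;> linarith [k.1, k.2]
end
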